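/- arXiv:1208.3959 — 5 statements merged into one kernel-verified Lean document; each statement's English description precedes it below -/
import Mathlib

section
/- Let u : ℝⁿ → ℝ be continuous and bounded, let L : ℝⁿ → [0,∞) be a nonnegative C¹ function with L(0) = DL(0) = 0 and L superlinear, and let t > 0. Then at every point x ∈ ℝⁿ and for every direction γ ∈ ℝⁿ with |γ| = 1, the one-sided directional derivative D_γ u_t(x) = lim_{h→0⁺} (u_t(x + hγ) − u_t(x))/h of the infimal convolution u_t exists, and D_γ u_t(x) = inf_{a' ∈ R u_t(x)} ( −D_γ L(a') ), where this infimum is attained at some a ∈ R u_t(x). -/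
open MeasureTheory Filter Metric Set
open scoped RealInnerProductSpace ENNReal Topology NNReal

noncomputable section

/-- Euclidean space `ℝⁿ`. -/
abbrev Eucl (n : ℕ) := EuclideanSpace ℝ (Fin n)

/-- Infimal convolution (Hopf–Lax formula): `u_t(x) = inf_a ( u(x + t a) + t L(a) )`. -/
def infConv {n : ℕ} (u L : Eucl n → ℝ) (t : ℝ) (x : Eucl n) : ℝ :=
  ⨅ a : Eucl n, (u (x + t • a) + t * L a)

/-- `L` is superlinear: `L x / ‖x‖ → ∞` as `‖x‖ → ∞`. -/
def Superlinear {n : ℕ} (L : Eucl n → ℝ) : Prop :=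
  Tendsto (fun x => L x / ‖x‖) (Bornology.cobounded (Eucl n)) atTop

/-- `g` is the weak (distributional) gradient of `u` on `ℝⁿ`. -/
def HasWeakGradient {n : ℕ} (u : Eucl n → ℝ) (g : Eucl n → Eucl n) : Prop :=
  ∀ φ : Eucl n → ℝ, ContDiff ℝ (⊤ : ℕ∞) φ → HasCompactSupport φ →
    ∀ v : Eucl n, ∫ x, u x * fderiv ℝ φ x v = - ∫ x, φ x * ⟪g x, v⟫

/-- The set `R u_t(x)` of minimizers in the infimal convolution. -/
def minSet {n : ℕ} (u L : Eucl n → ℝ) (t : ℝ) (x : Eucl n) : Set (Eucl n) :=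
  {a | infConv u L t x = u (x + t • a) + t * L a}

section Helpers

variable {n : ℕ} {u L : Eucl n → ℝ} {t : ℝ}

theorem aux_tendsto (hL_sl : Superlinear L) :
    Tendsto L (Bornology.cobounded (Eucl n)) atTop := by
  have h1 : Tendsto (fun x : Eucl n => ‖x‖) (Bornology.cobounded (Eucl n)) atTop :=
    tendsto_norm_cobounded_atTop
  have h2 := Tendsto.atTop_mul_atTop₀ hL_sl h1
  refine h2.congr' ?_
  filter_upwards [h1.eventually (eventually_gt_atTop 0)] with x hx
  field_simp

theorem aux_bdd (hu_bdd : ∃ M, ∀ x, |u x| ≤ M) (hL_nonneg : ∀ x, 0 ≤ L x) (ht : 0 < t)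
    (x : Eucl n) : BddBelow (range fun a : Eucl n => u (x + t • a) + t * L a) := by
  obtain ⟨M, hM⟩ := hu_bdd
  refine ⟨-M, ?_⟩
  rintro _ ⟨a, rfl⟩
  have h1 := (abs_le.1 (hM (x + t • a))).1
  have h2 := mul_nonneg ht.le (hL_nonneg a)
  show -M ≤ u (x + t • a) + t * L a
  linarith

theorem aux_le (hu_bdd : ∃ M, ∀ x, |u x| ≤ M) (hL_nonneg : ∀ x, 0 ≤ L x) (ht : 0 < t)
    (x a : Eucl n) : infConv u L t x ≤ u (x + t • a) + t * L a :=
  ciInf_le (aux_bdd hu_bdd hL_nonneg ht x) a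

theorem aux_mem (hu_bdd : ∃ M, ∀ x, |u x| ≤ M) (hL_nonneg : ∀ x, 0 ≤ L x) (ht : 0 < t)
    (x a : Eucl n) (h : ∀ b, u (x + t • a) + t * L a ≤ u (x + t • b) + t * L b) :
    a ∈ minSet u L t x :=
  le_antisymm (aux_le hu_bdd hL_nonneg ht x a) (le_ciInf h)

theorem aux_exists (hu_cont : Continuous u) (hu_bdd : ∃ M, ∀ x, |u x| ≤ M)
    (hL_nonneg : ∀ x, 0 ≤ L x) (hLc : Continuous L)
    (hL0 : L 0 = 0) (hL_sl : Superlinear L) (ht : 0 < t) :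
    ∃ R : ℝ, ∀ x : Eucl n, (minSet u L t x).Nonempty ∧ minSet u L t x ⊆ closedBall 0 R := by
  have hT := aux_tendsto hL_sl
  have hb := hu_bdd
  obtain ⟨M, hM⟩ := hb
  have hev : ∀ᶠ a in Bornology.cobounded (Eucl n), 2 * M / t < L a :=
    hT.eventually (eventually_gt_atTop _)
  have key : ∀ x a : Eucl n, 2 * M / t < L a →
      u (x + t • (0 : Eucl n)) + t * L 0 < u (x + t • a) + t * L a := by
    intro x a ha
    have h1 := (abs_le.1 (hM (x + t • a))).1
    have h2 := (abs_le.1 (hM (x + t • (0 : Eucl n)))).2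
    rw [div_lt_iff₀ ht] at ha
    rw [hL0]
    linarith
  obtain ⟨R, -, hR⟩ := (Metric.hasBasis_cobounded_compl_closedBall (0 : Eucl n)).eventually_iff.1 hev
  refine ⟨R, fun x => ⟨?_, ?_⟩⟩
  · have hc : Continuous fun a : Eucl n => u (x + t • a) + t * L a := by fun_prop
    obtain ⟨a, ha⟩ := hc.exists_forall_le' 0 (by
      rw [← Metric.cobounded_eq_cocompact]
      exact hev.mono fun a ha => (key x a ha).le)
    exact ⟨a, aux_mem hu_bdd hL_nonneg ht x a ha⟩
  · intro a ha
    by_contra hcon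
    have h1 := key x a (hR hcon)
    have h2 := aux_le hu_bdd hL_nonneg ht x 0
    have h3 : infConv u L t x = u (x + t • a) + t * L a := ha
    linarith

theorem aux_deriv (hL_C1 : ContDiff ℝ 1 L) (a γ : Eucl n) (s : ℝ) :
    HasDerivAt (fun s : ℝ => L (a + s • γ)) ⟪gradient L (a + s • γ), γ⟫ s := by
  have hd : DifferentiableAt ℝ L (a + s • γ) := (hL_C1.differentiable one_ne_zero) _
  have h1 := hd.hasFDerivAt
  have h2 : HasDerivAt (fun s : ℝ => a + s • γ) γ s := by
    simpa using ((hasDerivAt_id s).smul_const γ).const_add a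
  have h3 : ⟪gradient L (a + s • γ), γ⟫ = fderiv ℝ L (a + s • γ) γ := by simp [gradient]
  rw [h3]
  exact h1.comp_hasDerivAt s h2

theorem aux_grad (hL_C1 : ContDiff ℝ 1 L) (γ : Eucl n) :
    Continuous fun a => ⟪gradient L a, γ⟫ := by
  have h := hL_C1.continuous_fderiv one_ne_zero
  have : (fun a => ⟪gradient L a, γ⟫) = fun a => fderiv ℝ L a γ := by
    funext a
    simp [gradient]
  rw [this]
  fun_prop

theorem aux_limit (hu_cont : Continuous u) (hu_bdd : ∃ M, ∀ x, |u x| ≤ M)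
    (hL_nonneg : ∀ x, 0 ≤ L x) (hLc : Continuous L) (ht : 0 < t)
    {x a : Eucl n} {xs as : ℕ → Eucl n} (hx : Tendsto xs atTop (𝓝 x))
    (ha : Tendsto as atTop (𝓝 a)) (hm : ∀ k, as k ∈ minSet u L t (xs k)) :
    a ∈ minSet u L t x := by
  refine aux_mem hu_bdd hL_nonneg ht x a fun b => ?_
  have h1 : Tendsto (fun k => u (xs k + t • as k) + t * L (as k)) atTop
      (𝓝 (u (x + t • a) + t * L a)) :=
    ((hu_cont.tendsto _).comp (hx.add (ha.const_smul t))).add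
      (((hLc.tendsto _).comp ha).const_mul t)
  have h2 : Tendsto (fun k => u (xs k + t • b) + t * L b) atTop
      (𝓝 (u (x + t • b) + t * L b)) :=
    ((hu_cont.tendsto _).comp (hx.add_const (t • b))).add_const _
  refine le_of_tendsto_of_tendsto' h1 h2 fun k => ?_
  have h3 : infConv u L t (xs k) = _ := hm k
  rw [← h3]
  exact aux_le hu_bdd hL_nonneg ht _ _

end Helpers

/-- Lemma 2.1. For continuous bounded `u`, `t > 0`, every `x` and every
unit direction `γ`, the one-sided directional derivative `D_γ u_t(x)` exists and equals
`inf_{a' ∈ R u_t(x)} ( −D_γ L(a') )`, the infimum being attained at some `a ∈ R u_t(x)`. -/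
theorem stmt5 {n : ℕ}
    (u : Eucl n → ℝ) (hu_cont : Continuous u) (hu_bdd : ∃ M, ∀ x, |u x| ≤ M)
    (L : Eucl n → ℝ) (hL_nonneg : ∀ x, 0 ≤ L x) (hL_C1 : ContDiff ℝ 1 L)
    (hL0 : L 0 = 0) (hDL0 : gradient L 0 = 0) (hL_sl : Superlinear L)
    (t : ℝ) (ht : 0 < t) (x γ : Eucl n) (hγ : ‖γ‖ = 1) :
    ∃ a ∈ minSet u L t x,
      Tendsto (fun h : ℝ => (infConv u L t (x + h • γ) - infConv u L t x) / h)
        (𝓝[>] 0) (𝓝 (-⟪gradient L a, γ⟫)) ∧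
      IsLeast ((fun a' => -⟪gradient L a', γ⟫) '' minSet u L t x) (-⟪gradient L a, γ⟫) := by
  have hLc : Continuous L := hL_C1.continuous
  obtain ⟨R, hR⟩ := aux_exists hu_cont hu_bdd hL_nonneg hLc hL0 hL_sl ht
  have hg := aux_grad hL_C1 γ
  have hclosed : IsClosed (minSet u L t x) := by
    refine isClosed_of_closure_subset fun a ha => ?_
    obtain ⟨as, has, hlim⟩ := mem_closure_iff_seq_limit.1 ha
    exact aux_limit hu_cont hu_bdd hL_nonneg hLc ht tendsto_const_nhds hlim has
  have hcomp : IsCompact (minSet u L t x) :=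
    (isCompact_closedBall (0 : Eucl n) R).of_isClosed_subset hclosed (hR x).2
  obtain ⟨a, ha, hmin⟩ := hcomp.exists_isMinOn (hR x).1 hg.neg.continuousOn
  have hmin' : ∀ b ∈ minSet u L t x, -⟪gradient L a, γ⟫ ≤ -⟪gradient L b, γ⟫ :=
    fun b hb => hmin hb
  refine ⟨a, ha, ?_, ⟨a, ha, rfl⟩, ?_⟩
  swap
  · rintro _ ⟨b, hb, rfl⟩
    exact hmin' b hb
  refine tendsto_order.2 ⟨fun c hc => ?_, fun c hc => ?_⟩
  · by_contra hcon
    have hfr : ∃ᶠ h in 𝓝[>] (0 : ℝ), 0 < h ∧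
        (infConv u L t (x + h • γ) - infConv u L t x) / h ≤ c := by
      have h1 := not_eventually.1 hcon
      refine (h1.and_eventually self_mem_nhdsWithin).mono fun h hh => ⟨hh.2, not_lt.1 hh.1⟩
    obtain ⟨hs, hs_lim, hs_prop⟩ := exists_seq_forall_of_frequently hfr
    have hs0 : Tendsto hs atTop (𝓝 0) := hs_lim.mono_right nhdsWithin_le_nhds
    choose as has using fun k => (hR (x + hs k • γ)).1
    obtain ⟨b, -, φ, hφ, hb⟩ := (isCompact_closedBall (0 : Eucl n) R).tendsto_subseq
      fun k => (hR _).2 (has k)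
    have hsφ : Tendsto (fun k => hs (φ k)) atTop (𝓝 0) := hs0.comp hφ.tendsto_atTop
    have hx : Tendsto (fun k => x + hs (φ k) • γ) atTop (𝓝 x) := by
      simpa using (hsφ.smul_const γ).const_add x
    have hbm : b ∈ minSet u L t x :=
      aux_limit hu_cont hu_bdd hL_nonneg hLc ht hx hb fun k => has (φ k)
    have hξ : ∀ k, ∃ s ∈ Ioo 0 (hs k / t), -c ≤ ⟪gradient L (as k + s • γ), γ⟫ := by
      intro k
      obtain ⟨hpos, hle⟩ := hs_prop k
      have hpt : 0 < hs k / t := div_pos hpos ht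
      obtain ⟨s, hsm, hse⟩ := exists_hasDerivAt_eq_slope (fun s : ℝ => L (as k + s • γ))
        (fun s => ⟪gradient L (as k + s • γ), γ⟫) hpt
        (fun s _ => (aux_deriv hL_C1 (as k) γ s).continuousAt.continuousWithinAt)
        (fun s _ => aux_deriv hL_C1 (as k) γ s)
      refine ⟨s, hsm, ?_⟩
      have h1 : infConv u L t (x + hs k • γ) = _ := has k
      have h2 := aux_le hu_bdd hL_nonneg ht x (as k + (hs k / t) • γ)
      have h3 : x + t • (as k + (hs k / t) • γ) = x + hs k • γ + t • as k := by
        rw [smul_add, smul_smul, mul_div_cancel₀ _ ht.ne']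
        abel
      rw [h3] at h2
      rw [div_le_iff₀ hpos] at hle
      rw [hse, le_div_iff₀ (by simpa using hpt)]
      simp only [zero_smul, add_zero, sub_zero]
      have h4 : t * (-c * (hs k / t)) = -(c * hs k) := by field_simp
      refine le_of_mul_le_mul_left ?_ ht
      rw [h4]
      linarith
    choose s hsI hsc using hξ
    have hs1 : Tendsto (fun k => s (φ k)) atTop (𝓝 0) := by
      have h0 : Tendsto (fun k => hs (φ k) / t) atTop (𝓝 0) := by
        simpa using hsφ.div_const t
      exact squeeze_zero (fun k => (hsI (φ k)).1.le) (fun k => (hsI (φ k)).2.le) h0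
    have hlim : Tendsto (fun k => as (φ k) + s (φ k) • γ) atTop (𝓝 b) := by
      simpa using hb.add (hs1.smul_const γ)
    have h5 := ge_of_tendsto' ((hg.tendsto b).comp hlim) fun k => hsc (φ k)
    have h6 := hmin' b hbm
    linarith
  · have h1 : HasDerivAt (fun h : ℝ => t * L (a + h • (-(1 / t) • γ)))
        (-⟪gradient L a, γ⟫) 0 := by
      have h2 := (aux_deriv hL_C1 a (-(1 / t) • γ) 0).const_mul t
      have h3 : t * ⟪gradient L (a + (0 : ℝ) • (-(1 / t) • γ)), -(1 / t) • γ⟫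
          = -⟪gradient L a, γ⟫ := by
        rw [zero_smul, add_zero, inner_smul_right]
        field_simp
      rw [h3] at h2
      exact h2
    have h2 := (h1.tendsto_slope_zero_right).eventually (gt_mem_nhds hc)
    filter_upwards [h2, self_mem_nhdsWithin] with h hh hpos
    have hpos : 0 < h := hpos
    refine lt_of_le_of_lt ?_ hh
    simp only [zero_add, zero_smul, add_zero, smul_eq_mul]
    rw [div_eq_inv_mul]
    refine mul_le_mul_of_nonneg_left ?_ (inv_pos.2 hpos).le
    have h3 : infConv u L t x = _ := ha
    have h4 := aux_le hu_bdd hL_nonneg ht (x + h • γ) (a + h • (-(1 / t) • γ))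
    have h5 : x + h • γ + t • (a + h • (-(1 / t) • γ)) = x + t • a := by
      rw [smul_add, smul_smul, smul_smul]
      have : t * (h * -(1 / t)) = -h := by field_simp
      rw [← mul_assoc] at this
      rw [this, neg_smul]
      abel
    rw [h5] at h4
    linarith
end
end

section
/- Let u : ℝⁿ → ℝ be continuous and bounded, let L : ℝⁿ → [0,∞) be a nonnegative C¹ function with L(0) = DL(0) = 0 and L superlinear, and suppose u is differentiable at a point x ∈ ℝⁿ. Then for every direction γ ∈ ℝⁿ with |γ| = 1, the one-sided directional derivatives of the infimal convolutions satisfy D_γ u_t(x) → Du(x)·γ as t → 0⁺. -/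
open MeasureTheory Filter Metric Set
open scoped RealInnerProductSpace ENNReal Topology NNReal

noncomputable section

lemma aux_lin {n : ℕ} (L : Eucl n → ℝ) (hL_nonneg : ∀ x, 0 ≤ L x) (hL_sl : Superlinear L)
    (N : ℝ) (hN : 0 ≤ N) : ∃ R : ℝ, 0 ≤ R ∧ ∀ a, N * ‖a‖ ≤ L a + R := by
  have h := hL_sl.eventually_ge_atTop N
  obtain ⟨r, hr⟩ := (Metric.hasBasis_cobounded_compl_closedBall (0 : Eucl n)).eventually_iff.1 h
  refine ⟨N * |r|, by positivity, fun a => ?_⟩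
  by_cases ha : ‖a‖ ≤ |r|
  · have := mul_le_mul_of_nonneg_left ha hN
    linarith [hL_nonneg a]
  · push Not at ha
    have hpos : 0 < ‖a‖ := lt_of_le_of_lt (abs_nonneg r) ha
    have h2 : N ≤ L a / ‖a‖ := hr.2 (by simpa using lt_of_le_of_lt (le_abs_self r) ha)
    rw [le_div_iff₀ hpos] at h2
    have : 0 ≤ N * |r| := by positivity
    linarith

lemma aux_glob {n : ℕ} (u : Eucl n → ℝ) (hu_bdd : ∃ M, ∀ x, |u x| ≤ M)
    (x : Eucl n) (hux : DifferentiableAt ℝ u x) :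
    (∃ C : ℝ, 0 ≤ C ∧ ∀ v, |u (x + v) - u x| ≤ C * ‖v‖) ∧
    ∀ ε > 0, ∃ ρ > 0, ∀ v, ‖v‖ < ρ → |u (x + v) - u x - fderiv ℝ u x v| ≤ ε * ‖v‖ := by
  have h2 : ∀ ε > 0, ∃ ρ > 0, ∀ v, ‖v‖ < ρ →
      |u (x + v) - u x - fderiv ℝ u x v| ≤ ε * ‖v‖ := by
    intro ε hε
    have h := (hasFDerivAt_iff_isLittleO_nhds_zero.1 hux.hasFDerivAt).def hε
    obtain ⟨ρ, hρ, hb⟩ := Metric.eventually_nhds_iff.1 h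
    exact ⟨ρ, hρ, fun v hv => by simpa using hb (by simpa using hv)⟩
  refine ⟨?_, h2⟩
  obtain ⟨M, hM⟩ := hu_bdd
  obtain ⟨ρ, hρ, hb⟩ := h2 1 one_pos
  have hM0 : 0 ≤ M := (abs_nonneg _).trans (hM 0)
  refine ⟨‖fderiv ℝ u x‖ + 1 + 2 * M / ρ, by positivity, fun v => ?_⟩
  have hp := (fderiv ℝ u x).le_opNorm v
  rw [Real.norm_eq_abs] at hp
  by_cases hv : ‖v‖ < ρ
  · have h3 := hb v hv
    have h4 : |u (x + v) - u x| ≤ |u (x + v) - u x - fderiv ℝ u x v| + |fderiv ℝ u x v| := by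
      have := abs_add_le (u (x + v) - u x - fderiv ℝ u x v) (fderiv ℝ u x v)
      simpa using this
    have : 0 ≤ 2 * M / ρ * ‖v‖ := by positivity
    nlinarith
  · push Not at hv
    have h3 : |u (x + v) - u x| ≤ 2 * M := by
      have := abs_sub (u (x + v)) (u x)
      linarith [hM (x + v), hM x]
    have h4 : 2 * M ≤ 2 * M / ρ * ‖v‖ := by
      rw [div_mul_eq_mul_div, le_div_iff₀ hρ]
      exact mul_le_mul_of_nonneg_left hv (by positivity)
    have : 0 ≤ (‖fderiv ℝ u x‖ + 1) * ‖v‖ := by positivity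
    nlinarith

lemma aux_G {n : ℕ} (G : Eucl n → ℝ) (hG : ContDiff ℝ 1 G) 
    (hco : Tendsto G (cocompact _) atTop) :
    ∃ a0, ∀ ε > 0, ∃ δ > 0, ∀ a, G a ≤ G a0 + δ → ∀ v, ‖v‖ < δ →
      |G (a + v) - G a| ≤ ε * ‖v‖ := by
  obtain ⟨a0, h0⟩ := hG.continuous.exists_forall_le hco
  refine ⟨a0, fun ε hε => ?_⟩
  have hdiff : Differentiable ℝ G := hG.differentiable (by norm_num)
  have hlev : ∀ c, IsCompact {a | G a ≤ c} := by
    intro c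
    have h := hco.eventually_gt_atTop c
    obtain ⟨K, hK, hKs⟩ := mem_cocompact.1 h
    refine hK.of_isClosed_subset (isClosed_le hG.continuous continuous_const) ?_
    intro a ha
    by_contra hn
    have h1 : c < G a := hKs hn
    exact absurd h1 (not_lt.2 ha)
  have hU : IsOpen {a | ‖fderiv ℝ G a‖ < ε} :=
    isOpen_lt (hG.continuous_fderiv (by norm_num)).norm continuous_const
  have hsub : {a | G a ≤ G a0} ⊆ {a | ‖fderiv ℝ G a‖ < ε} := by
    intro a ha
    have : IsLocalMin G a := Filter.Eventually.of_forall fun y => le_trans ha (h0 y)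
    simp [this.fderiv_eq_zero, hε]
  obtain ⟨r, hr, hrs⟩ := (hlev (G a0)).exists_thickening_subset_open hU hsub
  have hnear : ∃ δ > 0, ∀ a, G a ≤ G a0 + δ → a ∈ thickening (r / 2) {a | G a ≤ G a0} := by
    have hc : IsCompact ({a | G a ≤ G a0 + 1} \ thickening (r / 2) {a | G a ≤ G a0}) :=
      (hlev _).diff isOpen_thickening
    rcases Set.eq_empty_or_nonempty
      ({a | G a ≤ G a0 + 1} \ thickening (r / 2) {a | G a ≤ G a0}) with he | hne
    · exact ⟨1, one_pos, fun a ha => sdiff_eq_empty.1 he ha⟩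
    · obtain ⟨b, hb, hbm⟩ := hc.exists_isMinOn hne hG.continuous.continuousOn
      have hbG : G a0 < G b := by
        by_contra hn
        exact hb.2 (self_subset_thickening (half_pos hr) _ (not_lt.1 hn))
      refine ⟨min 1 ((G b - G a0) / 2), lt_min one_pos (by linarith), fun a ha => ?_⟩
      by_contra hn
      have h1 := min_le_left 1 ((G b - G a0) / 2)
      have h2 := min_le_right 1 ((G b - G a0) / 2)
      have h3 : G b ≤ G a := hbm ⟨show G a ≤ G a0 + 1 by linarith, hn⟩
      linarith
  obtain ⟨δ, hδ, hn⟩ := hnear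
  refine ⟨min δ (r / 2), lt_min hδ (half_pos hr), fun a ha v hv => ?_⟩
  have ha' := hn a (ha.trans (by linarith [min_le_left δ (r / 2)]))
  obtain ⟨k, hk, hak⟩ := mem_thickening_iff.1 ha'
  have hball : ∀ y ∈ ball a (r / 2), ‖fderiv ℝ G y‖ ≤ ε := by
    intro y hy
    have : y ∈ thickening r {a | G a ≤ G a0} := by
      refine mem_thickening_iff.2 ⟨k, hk, ?_⟩
      have := dist_triangle y a k
      rw [mem_ball] at hy
      linarith
    exact le_of_lt (hrs this)
  have := (convex_ball a (r / 2)).norm_image_sub_le_of_norm_fderiv_le (𝕜 := ℝ)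
    (fun y _ => hdiff y) hball (mem_ball_self (half_pos hr))
    (show a + v ∈ ball a (r / 2) by simpa using hv.trans_le (min_le_right _ _))
  simpa using this

lemma aux_near {n : ℕ} (u : Eucl n → ℝ) (hu_bdd : ∃ M, ∀ x, |u x| ≤ M)
    (L : Eucl n → ℝ) (hL_nonneg : ∀ x, 0 ≤ L x)
    (hL0 : L 0 = 0) (hL_sl : Superlinear L)
    (x : Eucl n) (hux : DifferentiableAt ℝ u x) (a0 : Eucl n) (δ : ℝ) (hδ : 0 < δ) :
    ∃ T > 0, ∀ t, 0 < t → t < T → ∀ c : Eucl n, ‖c‖ ≤ 1 → ∀ σ, σ ≤ 1 → σ ≤ δ / 2 → ∀ a,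
      (∀ b, u (x + t • (c + a)) + t * L a ≤ u (x + t • (c + b)) + t * L b + t * σ) →
      fderiv ℝ u x a + L a ≤ fderiv ℝ u x a0 + L a0 + δ := by
  obtain ⟨⟨C, hC, hCb⟩, hd⟩ := aux_glob u hu_bdd x hux
  obtain ⟨R, hR, hRb⟩ := aux_lin L hL_nonneg hL_sl (C + 1) (by linarith)
  set B := R + 2 * C + 1 + ‖a0‖ + 1 with hB
  have hBpos : 0 < B := by positivity
  obtain ⟨ρ, hρ, hρb⟩ := hd (δ / (4 * B)) (by positivity)
  refine ⟨ρ / B, by positivity, fun t ht htT c hc σ hσ1 hσ a hmin => ?_⟩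
  rw [lt_div_iff₀ hBpos] at htT
  have hn : ∀ w : Eucl n, ‖t • w‖ = t * ‖w‖ := fun w => by
    rw [norm_smul, Real.norm_eq_abs, abs_of_pos ht]
  have ha : ‖a‖ ≤ R + 2 * C + 1 := by
    have h1 := hmin 0
    have h2 := (abs_le.1 (hCb (t • (c + a)))).1
    have h3 := (abs_le.1 (hCb (t • (c + 0)))).2
    rw [hn] at h2 h3
    rw [hL0] at h1
    rw [add_zero] at h1 h3
    have h4 := norm_add_le c a
    have h5 : t * L a ≤ t * (C * ‖c + a‖ + C * ‖c‖ + σ) := by nlinarith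
    have h6 := le_of_mul_le_mul_left h5 ht
    have h7 := hRb a
    have h8 := mul_le_mul_of_nonneg_left h4 hC
    have h9 := mul_le_mul_of_nonneg_left hc hC
    nlinarith
  have key : ∀ w : Eucl n, ‖w‖ ≤ B →
      |u (x + t • w) - u x - t * fderiv ℝ u x w| ≤ t * (δ / 4) := by
    intro w hw
    have h1 := hρb (t • w) (by rw [hn]; nlinarith)
    rw [hn, map_smul, smul_eq_mul] at h1
    refine h1.trans ?_
    have : δ / (4 * B) * (t * ‖w‖) ≤ δ / (4 * B) * (t * B) := by gcongr
    refine this.trans (le_of_eq ?_)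
    field_simp
  have k1 := (abs_le.1 (key (c + a) (by have := norm_add_le c a; linarith [norm_nonneg a0]))).1
  have k2 := (abs_le.1 (key (c + a0) (by have := norm_add_le c a0; linarith))).2
  have k3 := hmin a0
  rw [map_add] at k1 k2
  have : t * (fderiv ℝ u x a + L a) ≤ t * (fderiv ℝ u x a0 + L a0 + δ) := by
    have := mul_le_mul_of_nonneg_left hσ ht.le
    nlinarith
  exact le_of_mul_le_mul_left this ht

/-- Theorem 2.3. If `u` is continuous, bounded and differentiable at `x`,
then for every unit direction `γ` the one-sided directional derivatives of the infimal
convolutions satisfy `D_γ u_t(x) → Du(x)·γ` as `t → 0⁺`. -/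
theorem stmt7 {n : ℕ}
    (u : Eucl n → ℝ) (hu_cont : Continuous u) (hu_bdd : ∃ M, ∀ x, |u x| ≤ M)
    (L : Eucl n → ℝ) (hL_nonneg : ∀ x, 0 ≤ L x) (hL_C1 : ContDiff ℝ 1 L)
    (hL0 : L 0 = 0) (hDL0 : gradient L 0 = 0) (hL_sl : Superlinear L)
    (x : Eucl n) (hux : DifferentiableAt ℝ u x)
    (γ : Eucl n) (hγ : ‖γ‖ = 1) (D : ℝ → ℝ)
    (hD : ∀ t : ℝ, 0 < t →
      Tendsto (fun h : ℝ => (infConv u L t (x + h • γ) - infConv u L t x) / h)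
        (𝓝[>] 0) (𝓝 (D t))) :
    Tendsto D (𝓝[>] 0) (𝓝 ⟪gradient u x, γ⟫) := by
  have hin : ⟪gradient u x, γ⟫ = fderiv ℝ u x γ := by
    simp [gradient]
  rw [hin]
  set p := fderiv ℝ u x with hp
  have hG : ContDiff ℝ 1 (fun a => p a + L a) := p.contDiff.add hL_C1
  have hco : Tendsto (fun a => p a + L a) (cocompact (Eucl n)) atTop := by
    obtain ⟨R, hR, hRb⟩ := aux_lin L hL_nonneg hL_sl (‖p‖ + 1) (by positivity)
    refine tendsto_atTop_mono (fun a => ?_)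
      (tendsto_atTop_add_const_right _ (-R) (tendsto_norm_cocompact_atTop (E := Eucl n)))
    have h1 := p.le_opNorm a
    have h2 := (abs_le.1 ((Real.norm_eq_abs _).symm.le.trans h1)).1
    have := hRb a
    linarith
  obtain ⟨a0, hA⟩ := aux_G _ hG hco
  have hbdd : ∀ t > 0, ∀ y, BddBelow (range fun a : Eucl n => u (y + t • a) + t * L a) := by
    intro t ht y
    obtain ⟨M, hM⟩ := hu_bdd
    refine ⟨-M, ?_⟩
    rintro _ ⟨a, rfl⟩
    have h1 := (abs_le.1 (hM (y + t • a))).1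
    have h2 := mul_nonneg ht.le (hL_nonneg a)
    show -M ≤ u (y + t • a) + t * L a
    linarith
  have hle : ∀ t > 0, ∀ y b, infConv u L t y ≤ u (y + t • b) + t * L b :=
    fun t ht y b => ciInf_le (hbdd t ht y) b
  have hex : ∀ t y, ∀ s > 0, ∃ a, u (y + t • a) + t * L a < infConv u L t y + s :=
    fun t y s hs => exists_lt_of_ciInf_lt (show (⨅ a : Eucl n, (u (y + t • a) + t * L a)) < _ from
      lt_add_of_pos_right _ hs)
  rw [Metric.tendsto_nhdsWithin_nhds]
  intro ε hε
  obtain ⟨δ, hδ, hAδ⟩ := hA (ε / 4) (by positivity)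
  obtain ⟨T, hT, hB⟩ := aux_near u hu_bdd L hL_nonneg hL0 hL_sl x hux a0 δ hδ
  refine ⟨T, hT, fun t ht htT => ?_⟩
  have ht : 0 < t := ht
  have htT : t < T := by
    rw [Real.dist_eq, sub_zero, abs_of_pos ht] at htT
    exact htT
  suffices h : ∀ᶠ h in 𝓝[>] (0 : ℝ),
      |(infConv u L t (x + h • γ) - infConv u L t x) / h - p γ| ≤ ε / 2 by
    have h2 := le_of_tendsto ((hD t ht).sub_const (p γ)).abs h
    rw [Real.dist_eq]
    linarith
  have hη : 0 < min (t * min 1 (δ / 2)) (t * min 1 (δ / 2) / (ε / 4)) := by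
    have : 0 < t * min 1 (δ / 2) := mul_pos ht (lt_min one_pos (by linarith))
    exact lt_min this (by positivity)
  filter_upwards [Ioo_mem_nhdsGT hη] with h hh
  obtain ⟨hpos, hlt⟩ := hh
  obtain ⟨hl1, hl2⟩ := lt_min_iff.1 hlt
  rw [lt_div_iff₀ (by positivity)] at hl2
  obtain ⟨s, hs⟩ : ∃ s, s = h / t := ⟨_, rfl⟩
  have hts : h = t * s := by rw [hs]; field_simp
  have hspos : 0 < s := by rw [hs]; positivity
  rw [hts] at hl1
  have hs1 : s < min 1 (δ / 2) := lt_of_mul_lt_mul_left hl1 ht.le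
  have hs2 : s * (ε / 4) < min 1 (δ / 2) :=
    lt_of_mul_lt_mul_left (by rw [hts] at hl2; linarith) ht.le
  obtain ⟨hs1a, hs1b⟩ := lt_min_iff.1 hs1
  obtain ⟨hs2a, hs2b⟩ := lt_min_iff.1 hs2
  have hnorm : ‖s • γ‖ = s := by rw [norm_smul, hγ, Real.norm_eq_abs, abs_of_pos hspos, mul_one]
  have hxh : x + h • γ = x + t • (s • γ) := by rw [hts, mul_smul]
  have hslack : 0 < t * (s * (ε / 4)) := by positivity
  have hquot : ∀ q : ℝ, |q - h * p γ| ≤ h * (ε / 2) → |q / h - p γ| ≤ ε / 2 := by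
    intro q hq
    have : q / h - p γ = (q - h * p γ) / h := by field_simp
    rw [this, abs_div, abs_of_pos hpos, div_le_iff₀ hpos]
    linarith
  apply hquot
  rw [hxh, hts, abs_le]
  constructor
  · obtain ⟨a, ha⟩ := hex t (x + t • (s • γ)) _ hslack
    have h1 := hB t ht htT (s • γ) (by rw [hnorm]; exact hs1a.le) _ hs2a.le hs2b.le a (by
      intro b
      have := hle t ht (x + t • (s • γ)) b
      simp only [smul_add, ← add_assoc] at this ha ⊢
      linarith)
    have h2 := (abs_le.1 (hAδ a h1 (s • γ) (by rw [hnorm]; linarith))).2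
    have h3 := hle t ht x (s • γ + a)
    rw [smul_add, ← add_assoc, add_comm (s • γ) a] at h3
    rw [hnorm, map_add, map_smul, smul_eq_mul] at h2
    have h4 := mul_le_mul_of_nonneg_left h2 ht.le
    nlinarith
  · obtain ⟨a, ha⟩ := hex t x _ hslack
    have h1 := hB t ht htT 0 (by simp) _ hs2a.le hs2b.le a (by
      intro b
      have := hle t ht x b
      rw [zero_add, zero_add]
      linarith)
    have h2 := (abs_le.1 (hAδ a h1 (-(s • γ)) (by rw [norm_neg, hnorm]; linarith))).2
    have h3 := hle t ht (x + t • (s • γ)) (a + -(s • γ))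
    have h5 : x + t • (s • γ) + t • (a + -(s • γ)) = x + t • a := by
      rw [smul_add, smul_neg]; abel
    rw [h5] at h3
    rw [norm_neg, hnorm, map_add, map_neg, map_smul, smul_eq_mul] at h2
    have h4 := mul_le_mul_of_nonneg_left h2 ht.le
    nlinarith
end
end

section
/- Let H : ℝⁿ → [0,∞) be a strictly convex C¹ function with H(0) = DH(0) = 0 and H superlinear, and let L be the Legendre–Fenchel transform of H. Suppose there exist constants C > 1 and C' > 1 such that H(2x)/H(x) > 2C for every x ≠ 0 and sup_{∂B(0,r)} H < C'·inf_{∂B(0,r)} H for every r > 0. Then there exists a constant C'' < ∞ such that |DL(q)| ≤ C''·L(q)/|q| for every q ≠ 0. -/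
open MeasureTheory Filter Metric Set
open scoped RealInnerProductSpace ENNReal Topology NNReal

noncomputable section

/-- The Legendre–Fenchel transform `L(q) = sup_p ( p·q − H(p) )`. -/
def legendre {n : ℕ} (H : Eucl n → ℝ) (q : Eucl n) : ℝ :=
  ⨆ p : Eucl n, (⟪p, q⟫ - H p)

theorem exists_max_legendre {n : ℕ} (H : Eucl n → ℝ) (hc : Continuous H) (hH0 : H 0 = 0)
    (hH_sl : Superlinear H) (q : Eucl n) :
    ∃ p : Eucl n, ∀ x : Eucl n, ⟪x, q⟫ - H x ≤ ⟪p, q⟫ - H p := by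
  have h1 : ∀ᶠ x in Bornology.cobounded (Eucl n), ‖q‖ ≤ H x / ‖x‖ :=
    hH_sl.eventually_ge_atTop _
  obtain ⟨R, -, hR⟩ := (Metric.hasBasis_cobounded_compl_closedBall (0 : Eucl n)).eventually_iff.1 h1
  have hcont : Continuous (fun x : Eucl n => ⟪x, q⟫ - H x) := by fun_prop
  obtain ⟨p, -, hp⟩ := (isCompact_closedBall (0 : Eucl n) (max R 0)).exists_isMaxOn
    ⟨0, by simp⟩ hcont.continuousOn
  refine ⟨p, fun x => ?_⟩
  by_cases hx : x ∈ closedBall (0 : Eucl n) (max R 0)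
  · exact hp hx
  · have h0 : ⟪(0 : Eucl n), q⟫ - H 0 ≤ ⟪p, q⟫ - H p :=
      hp (show (0 : Eucl n) ∈ closedBall (0 : Eucl n) (max R 0) by simp)
    rw [inner_zero_left, hH0] at h0
    simp only [mem_closedBall, dist_zero_right, not_le, max_lt_iff] at hx
    have h2 := hR (show x ∈ (closedBall (0 : Eucl n) R)ᶜ by simpa using hx.1)
    rw [le_div_iff₀ hx.2] at h2
    have h3 := real_inner_le_norm x q
    linarith [mul_comm ‖x‖ ‖q‖]

/-- Proposition 2.7. If `H` is a nonnegative strictly convex superlinear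
`C¹` function with `H(0) = DH(0) = 0` satisfying `H(2x)/H(x) > 2C` and the quasi-radiality
condition on spheres, then its Legendre transform `L` satisfies
`|DL(q)| ≤ C'' L(q)/|q|` for all `q ≠ 0`. -/
theorem stmt9 {n : ℕ}
    (H : Eucl n → ℝ) (hH_nonneg : ∀ x, 0 ≤ H x) (hH_conv : StrictConvexOn ℝ Set.univ H)
    (hH_C1 : ContDiff ℝ 1 H) (hH0 : H 0 = 0) (hDH0 : gradient H 0 = 0)
    (hH_sl : Superlinear H)
    (C C' : ℝ) (hC : 1 < C) (hC' : 1 < C')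
    (hdouble : ∀ x : Eucl n, x ≠ 0 → 2 * C < H ((2 : ℝ) • x) / H x)
    (hquasi : ∀ r : ℝ, 0 < r →
      sSup (H '' Metric.sphere (0 : Eucl n) r) < C' * sInf (H '' Metric.sphere (0 : Eucl n) r)) :
    ∃ C'' : ℝ, ∀ q : Eucl n, q ≠ 0 →
      ‖gradient (legendre H) q‖ ≤ C'' * legendre H q / ‖q‖ := by
  have hc : Continuous H := hH_C1.continuous
  have hmax := exists_max_legendre H hc hH0 hH_sl
  have hbdd : ∀ q : Eucl n, BddAbove (range fun p : Eucl n => ⟪p, q⟫ - H p) := by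
    intro q
    obtain ⟨p, hp⟩ := hmax q
    exact ⟨_, by rintro _ ⟨x, rfl⟩; exact hp x⟩
  have hle : ∀ q p : Eucl n, ⟪p, q⟫ - H p ≤ legendre H q := fun q p => le_ciSup (hbdd q) p
  have hLnn : ∀ q, 0 ≤ legendre H q := by
    intro q
    have := hle q 0
    simpa [hH0] using this
  have hK : 0 < 1 + C' * (C / (C - 1)) := by
    have : 0 < C / (C - 1) := div_pos (by linarith) (by linarith)
    have : 0 < C' * (C / (C - 1)) := mul_pos (by linarith) this
    linarith
  refine ⟨1 + C' * (C / (C - 1)), fun q hq => ?_⟩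
  have hq' : 0 < ‖q‖ := norm_pos_iff.2 hq
  rw [le_div_iff₀ hq']
  have hnn := mul_nonneg hK.le (hLnn q)
  by_cases hd : DifferentiableAt ℝ (legendre H) q
  swap
  · have : gradient (legendre H) q = 0 := gradient_eq_zero_of_not_differentiableAt hd
    rw [this]
    simpa using hnn
  obtain ⟨p, hp⟩ := hmax q
  have hLq : legendre H q = ⟪p, q⟫ - H p := le_antisymm (ciSup_le hp) (hle q p)
  have hg : gradient (legendre H) q = p := by
    have hmin : IsLocalMin (fun x => legendre H x - innerSL ℝ p x) q := by
      refine Filter.Eventually.of_forall fun x => ?_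
      have := hle x p
      simp only [innerSL_apply_apply]
      linarith
    have h2 := hmin.hasFDerivAt_eq_zero
      (hd.hasGradientAt.hasFDerivAt.sub (innerSL ℝ p).hasFDerivAt)
    refine ext_inner_right ℝ fun v => ?_
    have h3 := congrArg (fun f => f v) h2
    simp only [ContinuousLinearMap.sub_apply, InnerProductSpace.toDual_apply_apply, innerSL_apply_apply,
      ContinuousLinearMap.zero_apply] at h3
    linarith
  rw [hg]
  by_cases hp0 : p = 0
  · rw [hp0]
    simpa using hnn
  have hp' : 0 < ‖p‖ := norm_pos_iff.2 hp0
  -- doubling at p / 2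
  have hd1 : 2 * C * H ((1 / 2 : ℝ) • p) ≤ H p := by
    have h1 := hdouble ((1 / 2 : ℝ) • p) (by simpa using hp0)
    rw [smul_smul] at h1
    norm_num at h1
    have hpos : 0 < H ((1 / 2 : ℝ) • p) := by
      refine lt_of_le_of_ne (hH_nonneg _) fun h => ?_
      rw [← h] at h1
      simp at h1
      linarith
    rw [lt_div_iff₀ hpos] at h1
    exact h1.le
  have h4 := hp ((1 / 2 : ℝ) • p)
  rw [real_inner_smul_left] at h4
  have hHp : H p ≤ C / (C - 1) * legendre H q := by
    rw [div_mul_eq_mul_div, le_div_iff₀ (by linarith), hLq]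
    nlinarith
  -- test with the vector of norm |p| in the direction of q
  have hs : ‖(‖p‖ / ‖q‖) • q‖ = ‖p‖ := by
    rw [norm_smul, Real.norm_of_nonneg (by positivity)]
    field_simp
  have hsup : H ((‖p‖ / ‖q‖) • q) ≤ sSup (H '' Metric.sphere (0 : Eucl n) ‖p‖) :=
    le_csSup ((isCompact_sphere _ _).image hc).bddAbove ⟨_, by simpa using hs, rfl⟩
  have hinf : sInf (H '' Metric.sphere (0 : Eucl n) ‖p‖) ≤ H p :=
    csInf_le ((isCompact_sphere _ _).image hc).bddBelow ⟨p, by simp, rfl⟩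
  have h5 := hquasi _ hp'
  have h6 := hle q ((‖p‖ / ‖q‖) • q)
  rw [real_inner_smul_left, real_inner_self_eq_norm_sq] at h6
  have h7 : ‖p‖ / ‖q‖ * ‖q‖ ^ 2 = ‖p‖ * ‖q‖ := by field_simp
  have h8 : C' * sInf (H '' Metric.sphere (0 : Eucl n) ‖p‖) ≤ C' * (C / (C - 1) * legendre H q) :=
    mul_le_mul_of_nonneg_left (hinf.trans hHp) (by linarith)
  linarith
end
end

section
/- Let u : ℝⁿ → ℝ be bounded with sup |u| = C, let L : ℝⁿ → [0,∞) be a nonnegative C¹ superlinear function with L(0) = DL(0) = 0, and let t > 0. Choose R > 0 such that t·L(a) ≥ 2C whenever |a| ≥ R. Then the infimal convolution u_t is globally Lipschitz on ℝⁿ with Lipschitz constant at most sup_{a ∈ B(0,R)} |DL(a)|. -/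
open MeasureTheory Filter Metric Set
open scoped RealInnerProductSpace ENNReal Topology NNReal

noncomputable section

theorem infConv_le_aux {n : ℕ}
    (u : Eucl n → ℝ) (C : ℝ) (hu : ∀ x, |u x| ≤ C)
    (L : Eucl n → ℝ) (hL_nonneg : ∀ x, 0 ≤ L x)
    (hL0 : L 0 = 0) (t : ℝ) (ht : 0 < t) (R : ℝ) (hR : 0 < R)
    (hRL : ∀ a : Eucl n, R ≤ ‖a‖ → 2 * C ≤ t * L a) (M : ℝ) (hM : 0 ≤ M)
    (hLip : ∀ a b : Eucl n, ‖a‖ ≤ R → ‖b‖ ≤ R → |L a - L b| ≤ M * ‖a - b‖)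
    (x y : Eucl n) : infConv u L t y ≤ infConv u L t x + M * ‖x - y‖ := by
  have hle : ∀ z a, infConv u L t z ≤ u (z + t • a) + t * L a := by
    intro z a
    refine ciInf_le ⟨-C, ?_⟩ a
    rintro _ ⟨b, rfl⟩
    have h1 := (abs_le.1 (hu (z + t • b))).1
    have h2 := mul_nonneg ht.le (hL_nonneg b)
    show -C ≤ u (z + t • b) + t * L b
    linarith
  have hyC : infConv u L t y ≤ C := by
    have h := hle y 0
    have h1 := (abs_le.1 (hu y)).2
    simp [hL0] at h
    linarith
  have hMn : 0 ≤ M * ‖x - y‖ := mul_nonneg hM (norm_nonneg _)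
  rw [← sub_le_iff_le_add]
  refine le_ciInf fun a => ?_
  have hlow := (abs_le.1 (hu (x + t • a))).1
  by_cases ha : R ≤ ‖a‖
  · have := hRL a ha
    linarith
  push Not at ha
  set w : Eucl n := t⁻¹ • (x - y) with hw
  have htw : t * ‖w‖ = ‖x - y‖ := by
    rw [hw, norm_smul, Real.norm_eq_abs, abs_of_pos (inv_pos.2 ht), ← mul_assoc,
      mul_inv_cancel₀ ht.ne', one_mul]
  have hy := hle y (a + w)
  have hxy : y + t • (a + w) = x + t • a := by
    rw [hw, smul_add, smul_smul, mul_inv_cancel₀ ht.ne', one_smul]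
    abel
  rw [hxy] at hy
  by_cases haw : ‖a + w‖ ≤ R
  · have h := (abs_le.1 (hLip (a + w) a haw ha.le)).2
    rw [add_sub_cancel_left] at h
    have h2 := mul_le_mul_of_nonneg_left h ht.le
    have h3 : t * (M * ‖w‖) = M * ‖x - y‖ := by rw [← htw]; ring
    rw [h3] at h2
    linarith
  · push Not at haw
    have hcont : ContinuousOn (fun s : ℝ => ‖a + s • w‖) (Icc 0 1) := by fun_prop
    have hmem : R ∈ Icc ((fun s : ℝ => ‖a + s • w‖) 0) ((fun s : ℝ => ‖a + s • w‖) 1) := by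
      simp only [zero_smul, add_zero, one_smul]
      exact ⟨ha.le, haw.le⟩
    obtain ⟨s, hs, hsR⟩ := intermediate_value_Icc zero_le_one hcont hmem
    have hsR' : ‖a + s • w‖ = R := hsR
    have h := (abs_le.1 (hLip (a + s • w) a hsR'.le ha.le)).2
    rw [add_sub_cancel_left, norm_smul, Real.norm_eq_abs, abs_of_nonneg hs.1] at h
    have hsw : s * ‖w‖ ≤ ‖w‖ := mul_le_of_le_one_left (norm_nonneg _) hs.2
    have h1 := h.trans (mul_le_mul_of_nonneg_left hsw hM)
    have h2 := mul_le_mul_of_nonneg_left h1 ht.le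
    have h3 : t * (M * ‖w‖) = M * ‖x - y‖ := by rw [← htw]; ring
    rw [h3] at h2
    have h4 := hRL _ hsR'.ge
    linarith

/-- If `u` is bounded with `sup |u| = C`, and `R > 0` is such that
`t L(a) ≥ 2C` whenever `|a| ≥ R`, then `u_t` is globally Lipschitz with constant at most
`sup_{a ∈ B(0,R)} |DL(a)|`. -/
theorem stmt14 {n : ℕ}
    (u : Eucl n → ℝ) (C : ℝ) (hC : IsLUB (Set.range fun x => |u x|) C)
    (L : Eucl n → ℝ) (hL_nonneg : ∀ x, 0 ≤ L x) (hL_C1 : ContDiff ℝ 1 L)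
    (hL0 : L 0 = 0) (hDL0 : gradient L 0 = 0) (hL_sl : Superlinear L)
    (t : ℝ) (ht : 0 < t) (R : ℝ) (hR : 0 < R)
    (hRL : ∀ a : Eucl n, R ≤ ‖a‖ → 2 * C ≤ t * L a) :
    ∀ x y : Eucl n, |infConv u L t x - infConv u L t y| ≤
      sSup ((fun a => ‖gradient L a‖) '' Metric.ball (0 : Eucl n) R) * ‖x - y‖ := by
  have hgn : ∀ a, ‖gradient L a‖ = ‖fderiv ℝ L a‖ := fun a => by
    simp [gradient]
  have hcont : Continuous (fun a => ‖gradient L a‖) := by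
    simp_rw [hgn]
    exact (hL_C1.continuous_fderiv one_ne_zero).norm
  set M := sSup ((fun a => ‖gradient L a‖) '' Metric.ball (0 : Eucl n) R) with hMdef
  have hbdd : BddAbove ((fun a => ‖gradient L a‖) '' Metric.ball (0 : Eucl n) R) :=
    ((isCompact_closedBall (0 : Eucl n) R).bddAbove_image hcont.continuousOn).mono
      (image_mono ball_subset_closedBall)
  have hball : ∀ a ∈ Metric.ball (0 : Eucl n) R, ‖gradient L a‖ ≤ M := fun a ha =>
    le_csSup hbdd ⟨a, ha, rfl⟩
  have hM : 0 ≤ M := (norm_nonneg _).trans (hball 0 (mem_ball_self hR))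
  have hcl : ∀ a ∈ Metric.closedBall (0 : Eucl n) R, ‖fderiv ℝ L a‖ ≤ M := by
    intro a ha
    rw [← closure_ball (0 : Eucl n) hR.ne'] at ha
    rw [← hgn]
    exact le_on_closure hball hcont.continuousOn continuousOn_const ha
  have hLip : ∀ a b : Eucl n, ‖a‖ ≤ R → ‖b‖ ≤ R → |L a - L b| ≤ M * ‖a - b‖ := by
    intro a b ha hb
    rw [← Real.norm_eq_abs]
    exact (convex_closedBall (0 : Eucl n) R).norm_image_sub_le_of_norm_fderiv_le
      (fun z _ => (hL_C1.differentiable one_ne_zero) z) hcl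
      (mem_closedBall_zero_iff.2 hb) (mem_closedBall_zero_iff.2 ha)
  have hu : ∀ x, |u x| ≤ C := fun x => hC.1 ⟨x, rfl⟩
  intro x y
  have h1 := infConv_le_aux u C hu L hL_nonneg hL0 t ht R hR hRL M hM hLip x y
  have h2 := infConv_le_aux u C hu L hL_nonneg hL0 t ht R hR hRL M hM hLip y x
  rw [norm_sub_rev y x] at h2
  rw [abs_le]
  constructor <;> linarith
end
end

section
/- Let L : ℝⁿ → [0,∞) be a convex C¹ function with L(0) = DL(0) = 0 such that there is a constant C < ∞ with sup_{r/2 < |x| < r} L(x) ≤ C·inf_{r/2 < |x| < r} L(x) for every r > 0. Then there exists a constant C' < ∞ such that |DL(x)| ≤ C'·L(x)/|x| for every x ≠ 0. -/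
open MeasureTheory Filter Metric Set
open scoped RealInnerProductSpace ENNReal Topology NNReal

noncomputable section

/-- If `L` is a convex `C¹` function with `L(0) = DL(0) = 0` satisfying
`sup_{r/2<|x|<r} L ≤ C inf_{r/2<|x|<r} L` for all `r > 0`, then there is `C' < ∞` with
`|DL(x)| ≤ C' L(x)/|x|` for every `x ≠ 0`. -/
theorem stmt17 {n : ℕ}
    (L : Eucl n → ℝ) (hL_nonneg : ∀ x, 0 ≤ L x) (hL_conv : ConvexOn ℝ Set.univ L)
    (hL_C1 : ContDiff ℝ 1 L) (hL0 : L 0 = 0) (hDL0 : gradient L 0 = 0)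
    (C : ℝ) (hann : ∀ r : ℝ, 0 < r → ∀ x y : Eucl n,
      r / 2 < ‖x‖ → ‖x‖ < r → r / 2 < ‖y‖ → ‖y‖ < r → L x ≤ C * L y) :
    ∃ C' : ℝ, ∀ x : Eucl n, x ≠ 0 → ‖gradient L x‖ ≤ C' * L x / ‖x‖ := by
  refine ⟨4 * C, fun x hx => ?_⟩
  have hρ : 0 < ‖x‖ := norm_pos_iff.mpr hx
  have hd : HasGradientAt L (gradient L x) x :=
    ((hL_C1.differentiable (by norm_num)) x).hasGradientAt
  generalize gradient L x = g at hd ⊢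
  have hsub : ∀ v : Eucl n, L x + ⟪g, v⟫ ≤ L (x + v) := by
    intro v
    have hline : HasDerivAt (fun t : ℝ => L (x + t • v)) ⟪g, v⟫ 0 := by
      have h1 : HasDerivAt (fun t : ℝ => x + t • v) v 0 := by
        simpa using ((hasDerivAt_id (0 : ℝ)).smul_const v).const_add x
      have h2 : HasFDerivAt L (InnerProductSpace.toDual ℝ (Eucl n) g) (x + (0 : ℝ) • v) := by
        simpa using hd.hasFDerivAt
      have h3 := h2.comp_hasDerivAt (0 : ℝ) h1
      rw [InnerProductSpace.toDual_apply_apply] at h3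
      exact h3
    have hc : ConvexOn ℝ Set.univ (fun t : ℝ => L (x + t • v)) := by
      have h := hL_conv.comp_affineMap (AffineMap.lineMap x (x + v) : ℝ →ᵃ[ℝ] Eucl n)
      have he : L ∘ (AffineMap.lineMap x (x + v) : ℝ →ᵃ[ℝ] Eucl n)
          = fun t : ℝ => L (x + t • v) := by
        funext t
        simp [AffineMap.lineMap_apply, add_comm]
      rw [he] at h
      simpa using h
    have h := hc.le_slope_of_hasDerivAt (mem_univ 0) (mem_univ 1) one_pos hline
    simp [slope_def_field] at h
    linarith
  have hv : ‖(‖x‖ / 4 * ‖g‖⁻¹) • g‖ ≤ ‖x‖ / 4 := by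
    rw [norm_smul, Real.norm_of_nonneg (by positivity), mul_assoc]
    exact mul_le_of_le_one_right (by positivity) inv_mul_le_one
  have h1 := hsub ((‖x‖ / 4 * ‖g‖⁻¹) • g)
  have hi : ⟪g, (‖x‖ / 4 * ‖g‖⁻¹) • g⟫ = ‖x‖ / 4 * ‖g‖ := by
    rw [real_inner_smul_right, real_inner_self_eq_norm_sq]
    by_cases hg : ‖g‖ = 0
    · simp [hg]
    · field_simp
  rw [hi] at h1
  generalize (‖x‖ / 4 * ‖g‖⁻¹) • g = v at hv h1
  have hu := norm_add_le x v
  have hl : ‖x‖ - ‖v‖ ≤ ‖x + v‖ := norm_sub_le_norm_add x v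
  have h2 := hann (4 / 3 * ‖x‖) (by positivity) (x + v) x
    (by linarith) (by linarith) (by linarith) (by linarith)
  have h3 := hL_nonneg x
  rw [le_div_iff₀ hρ]
  linarith
end
end
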